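/- arXiv:2202.13807 — 3 statements merged into one kernel-verified Lean document; each statement's English description precedes it below -/
import Mathlib

section
/- Let P = {q : ℚ | ∃ m n : ℤ, q = 2^m·3^n} and T = {1, 4/3, 3/2, 2}. For all a, b ∈ T, if the arithmetic mean (a+b)/2 belongs to P, then (a+b)/2 belongs to T. Hence the generator of means restricted to Pythagorean sounds produces no sound outside the four consonances T. -/
/-- The set of Pythagorean sounds. -/
def pythagoreanSounds : Set ℚ := {q : ℚ | ∃ m n : ℤ, q = 2 ^ m * 3 ^ n}

/-- The four Pythagorean consonances of the tablet. -/
def tablet : Set ℚ := {1, 4/3, 3/2, 2}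

/-!
In lowest terms, a Pythagorean sound has no prime factor other than `2` and `3`, whereas each mean
of two consonances that is not itself a consonance has `5`, `7` or `17` in its numerator.
-/

theorem padicValRat_prime_of_ne {p r : ℕ} [Fact p.Prime] [Fact r.Prime] (h : p ≠ r) :
    padicValRat p r = 0 := by
  rw [padicValRat.of_nat, padicValNat_primes h, Nat.cast_zero]

theorem padicValRat_pos_of_dvd_num {p : ℕ} [hp : Fact p.Prime] {q : ℚ} (hq : q ≠ 0)
    (hnum : (p : ℤ) ∣ q.num) : 0 < padicValRat p q := by
  have hden : ¬ p ∣ q.den := fun hden =>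
    Nat.not_coprime_of_dvd_of_dvd hp.out.one_lt (Int.natCast_dvd.mp hnum) hden q.reduced
  have hval : 1 ≤ padicValInt p q.num :=
    one_le_padicValNat_of_dvd (by simpa using hq) (Int.natCast_dvd.mp hnum)
  rw [padicValRat, padicValNat.eq_zero_of_not_dvd hden, Nat.cast_zero, sub_zero]
  exact_mod_cast hval

theorem padicValRat_eq_zero_of_mem_pythagoreanSounds {p : ℕ} [Fact p.Prime] (hp2 : p ≠ 2)
    (hp3 : p ≠ 3) {q : ℚ} (hq : q ∈ pythagoreanSounds) : padicValRat p q = 0 := by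
  obtain ⟨m, n, rfl⟩ := hq
  have h2 : padicValRat p 2 = 0 := padicValRat_prime_of_ne hp2
  have h3 : padicValRat p 3 = 0 := padicValRat_prime_of_ne hp3
  rw [padicValRat.mul (by positivity) (by positivity), padicValRat.zpow, padicValRat.zpow, h2, h3,
    mul_zero, mul_zero, add_zero]

theorem not_dvd_num_of_mem_pythagoreanSounds {p : ℕ} (hp : p.Prime) (hp2 : p ≠ 2) (hp3 : p ≠ 3)
    {q : ℚ} (hq : q ∈ pythagoreanSounds) : ¬ (p : ℤ) ∣ q.num := by
  have : Fact p.Prime := ⟨hp⟩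
  have hq0 : q ≠ 0 := by
    obtain ⟨m, n, rfl⟩ := hq
    positivity
  intro hnum
  exact (padicValRat_pos_of_dvd_num hq0 hnum).ne'
    (padicValRat_eq_zero_of_mem_pythagoreanSounds hp2 hp3 hq)

theorem mean_mem_of_notMem_tablet {a b : ℚ} (ha : a ∈ tablet) (hb : b ∈ tablet)
    (hmean : (a + b) / 2 ∉ tablet) :
    (a + b) / 2 ∈ ({7/6, 5/4, 17/12, 5/3, 7/4} : Set ℚ) := by
  refine Or.resolve_left ?_ hmean
  rcases ha with rfl | rfl | rfl | rfl <;> rcases hb with rfl | rfl | rfl | rfl <;>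
    norm_num [tablet]

theorem exists_prime_dvd_num_mean_of_notMem_tablet {a b : ℚ} (ha : a ∈ tablet) (hb : b ∈ tablet)
    (hmean : (a + b) / 2 ∉ tablet) :
    ∃ p : ℕ, p.Prime ∧ p ≠ 2 ∧ p ≠ 3 ∧ (p : ℤ) ∣ ((a + b) / 2).num := by
  rcases mean_mem_of_notMem_tablet ha hb hmean with h | h | h | h | h <;> rw [h]
  · exact ⟨7, by norm_num⟩
  · exact ⟨5, by norm_num⟩
  · exact ⟨17, by norm_num⟩
  · exact ⟨5, by norm_num⟩
  · exact ⟨7, by norm_num⟩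

/-- Any arithmetic mean of two tablet consonances that is a Pythagorean sound
already belongs to the tablet: the generator of means restricted to Pythagorean
sounds produces nothing outside the four consonances. -/
theorem mean_generator_tablet_pythagorean :
    ∀ a ∈ tablet, ∀ b ∈ tablet,
      (a + b) / 2 ∈ pythagoreanSounds → (a + b) / 2 ∈ tablet := by
  intro a ha b hb hsound
  by_contra hmean
  obtain ⟨p, hp, hp2, hp3, hdvd⟩ := exists_prime_dvd_num_mean_of_notMem_tablet ha hb hmean
  exact not_dvd_num_of_mem_pythagoreanSounds hp hp2 hp3 hsound hdvd
end

section
/- Let P = {q : ℚ | ∃ m n : ℤ, q = 2^m·3^n} and let S_P = {1, 9/8, 81/64, 4/3, 3/2, 27/16, 243/128, 2} be the Pythagorean scale. For all a, b ∈ S_P, if the arithmetic mean (a+b)/2 belongs to P then (a+b)/2 belongs to S_P. Hence the generator of means applied to the Pythagorean scale with the Pythagorean restriction produces no new sound. -/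
/-- The Pythagorean diatonic scale. -/
def pythagoreanScale : Set ℚ := {1, 9/8, 81/64, 4/3, 3/2, 27/16, 243/128, 2}

/-!
If `a`, `b` and `a + b` are Pythagorean, then `b / a` is a power of `2` or a power of `3`: otherwise
`a` and `b` have different `2`-adic and different `3`-adic valuations, so both valuations of `a + b`
are the minima of those of `a` and `b`, whence `a + b ≤ a`. Two sounds within a diapason whose mean
is Pythagorean therefore form a unison or a diapason, and the mean of `1` and `2` is the diapente.
-/

section TwoPrimes

variable {p q : ℕ} [Fact p.Prime] [Fact q.Prime]

theorem padicValRat_zpow_mul_zpow (hpq : p ≠ q) (m n : ℤ) :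
    padicValRat p ((p : ℚ) ^ m * (q : ℚ) ^ n) = m := by
  have hp : (p : ℚ) ≠ 0 := mod_cast (Fact.out : p.Prime).ne_zero
  have hq : (q : ℚ) ≠ 0 := mod_cast (Fact.out : q.Prime).ne_zero
  have hval : padicValRat p (q : ℚ) = 0 := by
    rw [padicValRat.of_nat, padicValNat_primes hpq, Nat.cast_zero]
  rw [padicValRat.mul (zpow_ne_zero m hp) (zpow_ne_zero n hq), padicValRat.zpow,
    padicValRat.zpow, padicValRat.self (Fact.out : p.Prime).one_lt, hval, mul_one, mul_zero,
    add_zero]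

theorem eq_min_of_zpow_mul_zpow_add_eq (hpq : p ≠ q) {i j k l m n : ℤ} (hik : i ≠ k)
    (h : (p : ℚ) ^ i * (q : ℚ) ^ j + (p : ℚ) ^ k * (q : ℚ) ^ l = (p : ℚ) ^ m * (q : ℚ) ^ n) :
    m = min i k := by
  have hp : (0 : ℚ) < p := mod_cast (Fact.out : p.Prime).pos
  have hq : (0 : ℚ) < q := mod_cast (Fact.out : q.Prime).pos
  have hval := padicValRat.add_eq_min (p := p) (q := (p : ℚ) ^ i * (q : ℚ) ^ j)
    (r := (p : ℚ) ^ k * (q : ℚ) ^ l) (by positivity) (by positivity) (by positivity)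
    (by simpa only [padicValRat_zpow_mul_zpow hpq] using hik)
  simpa only [h, padicValRat_zpow_mul_zpow hpq] using hval

theorem eq_or_eq_of_zpow_mul_zpow_add_eq (hpq : p ≠ q) {i j k l m n : ℤ}
    (h : (p : ℚ) ^ i * (q : ℚ) ^ j + (p : ℚ) ^ k * (q : ℚ) ^ l = (p : ℚ) ^ m * (q : ℚ) ^ n) :
    i = k ∨ j = l := by
  by_contra! ⟨hik, hjl⟩
  have hp : (1 : ℚ) < p := mod_cast (Fact.out : p.Prime).one_lt
  have hq : (1 : ℚ) < q := mod_cast (Fact.out : q.Prime).one_lt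
  have hm : m ≤ i := (eq_min_of_zpow_mul_zpow_add_eq hpq hik h).trans_le (min_le_left i k)
  have hn : n ≤ j := by
    have h_comm : (q : ℚ) ^ j * (p : ℚ) ^ i + (q : ℚ) ^ l * (p : ℚ) ^ k =
        (q : ℚ) ^ n * (p : ℚ) ^ m := by
      simpa only [mul_comm] using h
    exact (eq_min_of_zpow_mul_zpow_add_eq hpq.symm hjl h_comm).trans_le (min_le_left j l)
  have hle : (p : ℚ) ^ m * (q : ℚ) ^ n ≤ (p : ℚ) ^ i * (q : ℚ) ^ j := by
    gcongr
    exacts [hp.le, hq.le]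
  have hpos : 0 < (p : ℚ) ^ k * (q : ℚ) ^ l := by positivity
  linarith

end TwoPrimes

theorem pos_of_mem_pythagoreanSounds {a : ℚ} (ha : a ∈ pythagoreanSounds) : 0 < a := by
  obtain ⟨m, n, rfl⟩ := ha
  positivity

theorem two_mul_mem_pythagoreanSounds {a : ℚ} (ha : a ∈ pythagoreanSounds) :
    2 * a ∈ pythagoreanSounds := by
  obtain ⟨m, n, rfl⟩ := ha
  exact ⟨m + 1, n, by rw [zpow_add_one₀ two_ne_zero]; ring⟩

theorem exists_eq_zpow_mul_of_add_mem_pythagoreanSounds {a b : ℚ} (ha : a ∈ pythagoreanSounds)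
    (hb : b ∈ pythagoreanSounds) (hab : a + b ∈ pythagoreanSounds) :
    ∃ k : ℤ, b = 2 ^ k * a ∨ b = 3 ^ k * a := by
  obtain ⟨i, j, rfl⟩ := ha
  obtain ⟨k, l, rfl⟩ := hb
  obtain ⟨m, n, hsum⟩ := hab
  rcases eq_or_eq_of_zpow_mul_zpow_add_eq (p := 2) (q := 3) (by decide) (mod_cast hsum) with
    rfl | rfl
  · refine ⟨l - j, .inr ?_⟩
    rw [mul_left_comm, ← zpow_add₀ three_ne_zero, sub_add_cancel]
  · refine ⟨k - i, .inl ?_⟩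
    rw [← mul_assoc, ← zpow_add₀ two_ne_zero, sub_add_cancel]

theorem eq_or_eq_two_mul_of_mean_mem_pythagoreanSounds {a b : ℚ} (ha : a ∈ pythagoreanSounds)
    (hb : b ∈ pythagoreanSounds) (hmean : (a + b) / 2 ∈ pythagoreanSounds) (hab : a ≤ b)
    (hba : b ≤ 2 * a) : b = a ∨ b = 2 * a := by
  have hsum : a + b ∈ pythagoreanSounds := by
    simpa only [mul_div_cancel₀ (a + b) (two_ne_zero' ℚ)] using two_mul_mem_pythagoreanSounds hmean
  have ha_pos := pos_of_mem_pythagoreanSounds ha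
  obtain ⟨k, rfl | rfl⟩ := exists_eq_zpow_mul_of_add_mem_pythagoreanSounds ha hb hsum
  · have hk_nonneg : 0 ≤ k :=
      (one_le_zpow_iff_right₀ one_lt_two).1 ((le_mul_iff_one_le_left ha_pos).1 hab)
    have hk_le_one : k ≤ 1 := by
      rw [← zpow_le_zpow_iff_right₀ (one_lt_two (α := ℚ)), zpow_one]
      exact le_of_mul_le_mul_right hba ha_pos
    obtain rfl | rfl : k = 0 ∨ k = 1 := by lia
    · exact .inl (by rw [zpow_zero, one_mul])
    · exact .inr (by rw [zpow_one])
  · have hk_nonneg : 0 ≤ k :=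
      (one_le_zpow_iff_right₀ (by norm_num)).1 ((le_mul_iff_one_le_left ha_pos).1 hab)
    have hk_lt_one : k < 1 := by
      rw [← zpow_lt_zpow_iff_right₀ (by norm_num : (1 : ℚ) < 3), zpow_one]
      exact (le_of_mul_le_mul_right hba ha_pos).trans_lt (by norm_num)
    obtain rfl : k = 0 := by lia
    exact .inl (by rw [zpow_zero, one_mul])

theorem pythagoreanScale_subset_pythagoreanSounds : pythagoreanScale ⊆ pythagoreanSounds := by
  rintro a (rfl | rfl | rfl | rfl | rfl | rfl | rfl | rfl)
  exacts [⟨0, 0, by norm_num⟩, ⟨-3, 2, by norm_num⟩, ⟨-6, 4, by norm_num⟩, ⟨2, -1, by norm_num⟩,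
    ⟨-1, 1, by norm_num⟩, ⟨-4, 3, by norm_num⟩, ⟨-7, 5, by norm_num⟩, ⟨1, 0, by norm_num⟩]

theorem pythagoreanScale_subset_Icc : pythagoreanScale ⊆ Set.Icc 1 2 := by
  rintro a (rfl | rfl | rfl | rfl | rfl | rfl | rfl | rfl) <;> norm_num

theorem mean_generator_pythagorean_scale_closed_general {S : Set ℚ}
    (hsounds : S ⊆ pythagoreanSounds) (hdiapason : S ⊆ Set.Icc 1 2) (hdiapente : 3 / 2 ∈ S) :
    ∀ a ∈ S, ∀ b ∈ S, (a + b) / 2 ∈ pythagoreanSounds → (a + b) / 2 ∈ S := by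
  intro a ha b hb hmean
  wlog hab : a ≤ b generalizing a b
  · rw [add_comm] at hmean ⊢
    exact this b hb a ha hmean (le_of_not_ge hab)
  have ha_one : 1 ≤ a := (hdiapason ha).1
  have hb_two : b ≤ 2 := (hdiapason hb).2
  rcases eq_or_eq_two_mul_of_mean_mem_pythagoreanSounds (hsounds ha) (hsounds hb) hmean hab
    (by linarith) with unison | diapason
  · rwa [unison, add_self_div_two]
  · have hmean_eq : (a + b) / 2 = 3 / 2 := by linarith
    rwa [hmean_eq]

/-- Any arithmetic mean of two sounds of the Pythagorean scale that is a Pythagorean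
sound already belongs to the scale: the generator of means applied to the
Pythagorean scale with the Pythagorean restriction produces no new sound. -/
theorem mean_generator_pythagorean_scale_closed :
    ∀ a ∈ pythagoreanScale, ∀ b ∈ pythagoreanScale,
      (a + b) / 2 ∈ pythagoreanSounds → (a + b) / 2 ∈ pythagoreanScale :=
  mean_generator_pythagorean_scale_closed_general pythagoreanScale_subset_pythagoreanSounds
    pythagoreanScale_subset_Icc (by simp [pythagoreanScale])
end

section
/- Let N = {q : ℚ | ∃ m n p : ℤ, q = 2^m·3^n·5^p}, T = {1, 4/3, 3/2, 2}, and S₁ = {1, 9/8, 5/4, 81/64, 4/3, 45/32, 3/2, 25/16, 5/3, 2}. Then S₁ is the smallest subset of ℚ containing T that is mean-closed with respect to N: (a) T ⊆ S₁; (b) for all a, b ∈ S₁, if (a+b)/2 ∈ N then (a+b)/2 ∈ S₁; (c) every subset S ⊆ ℚ with T ⊆ S satisfying the closure property (b) contains S₁. -/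
/-- The set of natural (5-limit) sounds. -/
def naturalSounds : Set ℚ := {q : ℚ | ∃ m n p : ℤ, q = 2 ^ m * 3 ^ n * 5 ^ p}

/-- The scale 𝔖_N^(1) obtained by iterating the generator of means from the tablet
under the natural restriction. -/
def scaleOne : Set ℚ := {1, 9/8, 5/4, 81/64, 4/3, 45/32, 3/2, 25/16, 5/3, 2}

/-- A set is mean-closed with respect to the natural sounds when every arithmetic
mean of two of its elements that is a natural sound again belongs to it. -/
def MeanClosed (S : Set ℚ) : Prop :=
  ∀ a ∈ S, ∀ b ∈ S, (a + b) / 2 ∈ naturalSounds → (a + b) / 2 ∈ S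

/-! A prime `p > 5` has valuation `0` at every natural sound, so the numerator of a natural sound is
`5`-smooth, that is, in `Nat.smoothNumbers 6`. Every mean of two elements of `scaleOne` that lies
outside `scaleOne` has a prime factor above `5` in its numerator and hence is not natural.
Conversely, each sound of `scaleOne` outside the tablet is obtained by successive natural means. -/

theorem padicValRat_ne_zero_of_dvd_num {p : ℕ} [hp : Fact p.Prime] {q : ℚ} (hq : q ≠ 0)
    (hdvd : p ∣ q.num.natAbs) : padicValRat p q ≠ 0 := by
  have hden : ¬p ∣ q.den := fun hdvd' =>
    Nat.not_coprime_of_dvd_of_dvd hp.out.one_lt hdvd hdvd' q.reduced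
  rw [padicValRat_def, padicValNat.eq_zero_of_not_dvd hden, Nat.cast_zero, sub_zero,
    Nat.cast_ne_zero]
  exact (dvd_iff_padicValNat_ne_zero (Int.natAbs_ne_zero.mpr (Rat.num_ne_zero.mpr hq))).mp hdvd

theorem padicValRat_natCast_zpow_eq_zero_of_not_dvd {p k : ℕ} [Fact p.Prime] (hk : ¬p ∣ k) (e : ℤ) :
    padicValRat p ((k : ℚ) ^ e) = 0 := by
  rw [padicValRat.zpow, padicValRat.of_nat, padicValNat.eq_zero_of_not_dvd hk, Nat.cast_zero,
    mul_zero]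

theorem ne_zero_of_mem_naturalSounds {q : ℚ} (hq : q ∈ naturalSounds) : q ≠ 0 := by
  obtain ⟨m, n, p, rfl⟩ := hq
  positivity

theorem padicValRat_eq_zero_of_mem_naturalSounds {p : ℕ} [Fact p.Prime] (hp5 : 5 < p) {q : ℚ}
    (hq : q ∈ naturalSounds) : padicValRat p q = 0 := by
  obtain ⟨m, n, l, rfl⟩ := hq
  have hval {k : ℕ} (hk : 0 < k) (hk5 : k ≤ 5) (e : ℤ) : padicValRat p ((k : ℚ) ^ e) = 0 :=
    padicValRat_natCast_zpow_eq_zero_of_not_dvd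
      (Nat.not_dvd_of_pos_of_lt hk (hk5.trans_lt hp5)) e
  have h2 : padicValRat p (2 ^ m) = 0 := mod_cast hval (k := 2) (by simp) (by simp) m
  have h3 : padicValRat p (3 ^ n) = 0 := mod_cast hval (k := 3) (by simp) (by simp) n
  have h5 : padicValRat p (5 ^ l) = 0 := mod_cast hval (k := 5) (by simp) le_rfl l
  rw [padicValRat.mul (by positivity) (by positivity),
    padicValRat.mul (by positivity) (by positivity), h2, h3, h5, add_zero, add_zero]

theorem num_mem_smoothNumbers_of_mem_naturalSounds {q : ℚ} (hq : q ∈ naturalSounds) :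
    q.num.natAbs ∈ Nat.smoothNumbers 6 := by
  refine Nat.mem_smoothNumbers'.mpr fun p hp hdvd => ?_
  by_contra! hp6
  have : Fact p.Prime := ⟨hp⟩
  exact padicValRat_ne_zero_of_dvd_num (ne_zero_of_mem_naturalSounds hq) hdvd
    (padicValRat_eq_zero_of_mem_naturalSounds hp6 hq)

theorem mean_mem_scaleOne_of_num_mem_smoothNumbers : ∀ a ∈ scaleOne, ∀ b ∈ scaleOne,
    ((a + b) / 2).num.natAbs ∈ Nat.smoothNumbers 6 → (a + b) / 2 ∈ scaleOne := by
  simp only [scaleOne, Set.mem_insert_iff, Set.mem_singleton_iff, forall_eq_or_imp, forall_eq]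
  -- Splitting first keeps each `Decidable` instance small enough to be synthesized.
  and_intros <;> decide +kernel

theorem meanClosed_scaleOne : MeanClosed scaleOne := fun a ha b hb hab =>
  mean_mem_scaleOne_of_num_mem_smoothNumbers a ha b hb
    (num_mem_smoothNumbers_of_mem_naturalSounds hab)

theorem MeanClosed.mem_of_mean_eq {S : Set ℚ} (hS : MeanClosed S) {a b c : ℚ} (ha : a ∈ S)
    (hb : b ∈ S) (hmean : (a + b) / 2 = c) (hc : c ∈ naturalSounds) : c ∈ S := by
  subst hmean
  exact hS a ha b hb hc

theorem MeanClosed.scaleOne_subset {S : Set ℚ} (hS : MeanClosed S) (h1 : 1 ∈ S) (h43 : 4 / 3 ∈ S)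
    (h2 : 2 ∈ S) : scaleOne ⊆ S := by
  have h32 : 3 / 2 ∈ S := hS.mem_of_mean_eq h1 h2 (by norm_num) ⟨-1, 1, 0, by norm_num⟩
  have h53 : 5 / 3 ∈ S := hS.mem_of_mean_eq h43 h2 (by norm_num) ⟨0, -1, 1, by norm_num⟩
  have h54 : 5 / 4 ∈ S := hS.mem_of_mean_eq h1 h32 (by norm_num) ⟨-2, 0, 1, by norm_num⟩
  have h98 : 9 / 8 ∈ S := hS.mem_of_mean_eq h1 h54 (by norm_num) ⟨-3, 2, 0, by norm_num⟩
  have h2516 : 25 / 16 ∈ S := hS.mem_of_mean_eq h98 h2 (by norm_num) ⟨-4, 0, 2, by norm_num⟩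
  have h4532 : 45 / 32 ∈ S := hS.mem_of_mean_eq h54 h2516 (by norm_num) ⟨-5, 2, 1, by norm_num⟩
  have h8164 : 81 / 64 ∈ S := hS.mem_of_mean_eq h98 h4532 (by norm_num) ⟨-6, 4, 0, by norm_num⟩
  rintro q (rfl | rfl | rfl | rfl | rfl | rfl | rfl | rfl | rfl | rfl) <;> assumption

theorem tablet_subset_scaleOne : tablet ⊆ scaleOne := by
  rintro q (rfl | rfl | rfl | rfl) <;> simp [scaleOne]

/-- 𝔖_N^(1) is the smallest subset of ℚ containing the four tablet consonances that
is mean-closed with respect to the natural sounds. -/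
theorem scaleOne_smallest_mean_closed :
    tablet ⊆ scaleOne ∧ MeanClosed scaleOne ∧
    ∀ S : Set ℚ, tablet ⊆ S → MeanClosed S → scaleOne ⊆ S := by
  refine ⟨tablet_subset_scaleOne, meanClosed_scaleOne, fun S hT hS => ?_⟩
  exact hS.scaleOne_subset (hT (by simp [tablet])) (hT (by simp [tablet])) (hT (by simp [tablet]))
end
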